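/- Let n ≥ 2 and 1 ≤ p < n, and set p* = np/(n−p). There is a constant c depending only on n and p such that for every f ∈ C^∞(ℝⁿ) and every cube Q ⊂ ℝⁿ with sides parallel to the axes and side length ℓ(Q), ‖f − f_Q‖_{L^{p*,p}(Q, dx/|Q|)} ≤ c · ℓ(Q) · (⨍_Q |∇f|^p)^{1/p}, where f_Q = ⨍_Q f and the Lorentz norm is taken with respect to the normalized Lebesgue measure dx/|Q| on Q. -/

import Mathlib

/-!
The proof is the truncation method, started from one inequality for pairs of points.

*Pair inequality.* For `E ⊆ Q` and `g` of class `C¹`,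
`∫_E ∫_Q |g x - g z| dz dx ≤ C ℓ(Q)ⁿ |E|^{1/n} ∫_Q |∇g|`
(`lintegral_lintegral_enorm_sub_le`, and `pair_inequality_cube` for the normalized measure).
Bound `|g x - g z|` by the integral of `|∇g|` along the segment. At a fixed parameter `s`, the
substitution `y = x + s (z - x)` turns the double integral into
`s⁻ⁿ ∫_Q |∇g(y)| |E ∩ B(y, s d)| dy ≤ min (s⁻ⁿ |E|) (C dⁿ) ∫_Q |∇g|`, and the minimum integrates
over `0 < s ≤ 1` to a multiple of `d^{n-1} |E|^{1/n}` because `n ≥ 2`.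

*Consequences.* Taking `E = Q` gives the `(1,1)` Poincaré inequality (`poincare_of_pair`). With
`u = f - f_Q`, it shows that `{|u| > t}` fills at most half of `Q` once
`t > t₀ = 2 B ‖∇f‖_p`, where `B` is the constant of the pair inequality. For such `t`, applying
the pair inequality to a smooth cutoff of `u` between the levels `t` and `2t`, with
`E = {|u| > 2t}`, gives
`t λ(2t)^{1-1/n} ≤ C ℓ(Q) ∫_{t < |u| ≤ 2t} |∇f|`, where `λ` is the distribution function of `|u|`
(`layer_estimate`).

*Summation.* Hölder bounds the right side by `C ℓ(Q) G(t)^{1/p} λ(t)^{1-1/p}`, with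
`G(t) = ∫_{t < |u| ≤ 2t} |∇f|^p`. Either `λ(2t) ≤ ε λ(t)`, or `λ(t)` may be replaced by
`λ(2t) / ε`. In both cases (`dichotomy`)
`(t λ(2t)^{1/p*})^p ≤ C_ε ℓ(Q)^p G(t) + ε^{p/p*} (t λ(t)^{1/p*})^p`.
Integrate against `dt / t`. The layers contribute at most `∫ |∇f|^p` (`lintegral_layers_le`), the
range `t ≤ 2 t₀` contributes at most `(2 t₀)^p`, and the last term is absorbed for small `ε`, since
the Lorentz integral is finite (`u` is bounded on `Q`). This is `lorentz_integral_le`.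
-/

open MeasureTheory ENNReal Filter Set

noncomputable section

/-- `ℝⁿ` with the Euclidean structure. -/
abbrev En (n : ℕ) := EuclideanSpace ℝ (Fin n)

/-- Axis-parallel closed cube with corner `a` and side length `h`. -/
def cube {n : ℕ} (a : En n) (h : ℝ) : Set (En n) := {y | ∀ i, a i ≤ y i ∧ y i ≤ a i + h}

/-- Riesz potential of order `1` of a (nonnegative) function:
`I₁ g (x) = ∫ g(y) |x-y|^{-(n-1)} dy`. -/
def riesz (n : ℕ) (g : En n → ℝ) (x : En n) : ℝ≥0∞ :=
  ∫⁻ y, ENNReal.ofReal (g y) * ENNReal.ofReal (‖x - y‖ ^ (-((n : ℝ) - 1)))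

/-- The quantity `(∫ g^p dμ)^{1/p}` for an `ℝ≥0∞`-valued function `g`. -/
def lpNorm {α : Type*} [MeasurableSpace α] (p : ℝ) (g : α → ℝ≥0∞) (μ : Measure α) : ℝ≥0∞ :=
  (∫⁻ x, g x ^ p ∂μ) ^ (1 / p)

/-- Average `⨍_Q g` of an `ℝ≥0∞`-valued function over a set `Q`. -/
def avgE {n : ℕ} (g : En n → ℝ≥0∞) (Q : Set (En n)) : ℝ≥0∞ :=
  (volume Q)⁻¹ * ∫⁻ x in Q, g x

/-- The `A_{p,p*}` constant of a weight `w`; here `ps` plays the role of `p*` and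
`pp` that of `p' = p/(p-1)`:
`[w]_{A_{p,p*}} = sup_Q (⨍_Q w^{p*}) (⨍_Q w^{-p'})^{p*/p'}`. -/
def Apq (n : ℕ) (ps pp : ℝ) (w : En n → ℝ) : ℝ≥0∞ :=
  ⨆ (a : En n) (h : ℝ) (_ : 0 < h),
    avgE (fun x => ENNReal.ofReal (w x) ^ ps) (cube a h) *
      avgE (fun x => ENNReal.ofReal (w x) ^ (-pp)) (cube a h) ^ (ps / pp)

/-- The `A_{1,s}` constant of a weight `w`: the least `c` such that
`⨍_Q w^s ≤ c · essinf_Q w^s` for every cube `Q`. -/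
def A1C (n : ℕ) (s : ℝ) (w : En n → ℝ) : ℝ≥0∞ :=
  sInf {c : ℝ≥0∞ | ∀ (a : En n) (h : ℝ), 0 < h →
    avgE (fun x => ENNReal.ofReal (w x) ^ s) (cube a h) ≤
      c * essInf (fun x => ENNReal.ofReal (w x) ^ s) (volume.restrict (cube a h))}

/-- Hardy–Littlewood maximal operator over axis-parallel cubes containing `x`. -/
def maximal (n : ℕ) (g : En n → ℝ≥0∞) (x : En n) : ℝ≥0∞ :=
  ⨆ (a : En n) (h : ℝ) (_ : 0 < h) (_ : x ∈ cube a h), avgE g (cube a h)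

/-- Weak `L^s` quasinorm `sup_{t>0} t · μ{|g|>t}^{1/s}` of a real function. -/
def wnormR {α : Type*} [MeasurableSpace α] (s : ℝ) (g : α → ℝ) (μ : Measure α) : ℝ≥0∞ :=
  ⨆ (t : ℝ) (_ : 0 < t), ENNReal.ofReal t * μ {x | t < |g x|} ^ (1 / s)

/-- The Lorentz `L^{s,q}` norm with respect to a measure `μ`:
`‖g‖_{L^{s,q}(μ)} = (s ∫₀^∞ (t μ{|g|>t}^{1/s})^q dt/t)^{1/q}`. -/
def lorentzSQ {α : Type*} [MeasurableSpace α] (s q : ℝ) (g : α → ℝ) (μ : Measure α) : ℝ≥0∞ :=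
  (ENNReal.ofReal s * ∫⁻ t in Set.Ioi (0 : ℝ),
      (ENNReal.ofReal t * μ {x | t < |g x|} ^ (1 / s)) ^ q * (ENNReal.ofReal t)⁻¹) ^ (1 / q)

/-! ### The pair inequality -/

lemma lintegral_homothety {n : ℕ} (H : En n → ℝ≥0∞) (hH : Measurable H) (x : En n) {s : ℝ}
    (hs : 0 < s) :
    ∫⁻ z, H (x + s • (z - x)) = ENNReal.ofReal ((s ^ n)⁻¹) * ∫⁻ y, H y := by
  rw [lintegral_sub_right_eq_self (fun w => H (x + s • w)) x]
  have h1 : ∫⁻ w, H (x + s • w) =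
      ∫⁻ v, H (x + v) ∂(Measure.map (fun w : En n => s • w) volume) := by
    rw [lintegral_map (by fun_prop) (by fun_prop)]
  rw [h1, Measure.map_addHaar_smul volume hs.ne', lintegral_smul_measure,
    lintegral_add_left_eq_self]
  simp [abs_of_pos hs]

lemma enorm_sub_le_lintegral_segment {n : ℕ} {g : En n → ℝ} (hg : ContDiff ℝ 1 g) (x z : En n) :
    ‖g x - g z‖ₑ ≤ ∫⁻ s in Ioc (0 : ℝ) 1, ‖z - x‖ₑ * ‖fderiv ℝ g (x + s • (z - x))‖ₑ := by
  have hc : Continuous fun s : ℝ => fderiv ℝ g (x + s • (z - x)) (z - x) :=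
    ((hg.continuous_fderiv one_ne_zero).comp (by fun_prop)).clm_apply continuous_const
  have hd : ∀ s ∈ uIcc (0 : ℝ) 1, HasDerivAt (fun s : ℝ => g (x + s • (z - x)))
      (fderiv ℝ g (x + s • (z - x)) (z - x)) s := by
    intro s _
    have h1 : HasDerivAt (fun s : ℝ => x + s • (z - x)) (z - x) s := by
      simpa using ((hasDerivAt_id s).smul_const (z - x)).const_add x
    exact ((hg.differentiable one_ne_zero) _).hasFDerivAt.comp_hasDerivAt s h1
  have h2 := intervalIntegral.integral_eq_sub_of_hasDerivAt hd (hc.intervalIntegrable _ _)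
  rw [intervalIntegral.integral_of_le zero_le_one] at h2
  simp only [one_smul, zero_smul, add_zero, add_sub_cancel] at h2
  rw [← enorm_neg, neg_sub, ← h2]
  refine (enorm_integral_le_lintegral_enorm _).trans (lintegral_mono fun s => ?_)
  rw [mul_comm]
  exact ContinuousLinearMap.le_opENorm _ _

/-- Averages of `G` over the intermediate points of the segments joining `E` to `Q`. The first
bound comes from the Jacobian `s ^ (-n)` of the homothety, the second from the fact that its image
stays within distance `s d` of the centre. -/
lemma lintegral_segment_le {n : ℕ} {Q E : Set (En n)} (hQ : MeasurableSet Q) (hQc : Convex ℝ Q)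
    {d : ℝ} (hd0 : 0 ≤ d) (hd : ∀ x ∈ Q, ∀ z ∈ Q, ‖z - x‖ ≤ d) (hE : MeasurableSet E) (hEQ : E ⊆ Q)
    {G : En n → ℝ≥0∞} (hG : Measurable G) {s : ℝ} (hs : 0 < s) (hs1 : s ≤ 1) :
    ∫⁻ x in E, ∫⁻ z in Q, G (x + s • (z - x)) ≤
      min (ENNReal.ofReal ((s ^ n)⁻¹) * volume E)
        (ENNReal.ofReal (d ^ n) * volume (Metric.ball (0 : En n) 1)) * ∫⁻ y in Q, G y := by
  have key : ∀ x ∈ E, ∫⁻ z in Q, G (x + s • (z - x)) ≤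
      ENNReal.ofReal ((s ^ n)⁻¹) *
        ∫⁻ y, Q.indicator G y * (Metric.closedBall y (s * d)).indicator 1 x := by
    intro x hx
    have hm : Measurable fun y => Q.indicator G y * (Metric.closedBall x (s * d)).indicator 1 y :=
      (hG.indicator hQ).mul (measurable_one.indicator measurableSet_closedBall)
    have hsymm : (fun y => Q.indicator G y * (Metric.closedBall y (s * d)).indicator 1 x) =
        fun y => Q.indicator G y * (Metric.closedBall x (s * d)).indicator 1 y := by
      ext y
      simp only [indicator, Metric.mem_closedBall, dist_comm, Pi.one_apply]
    rw [hsymm, ← lintegral_homothety _ hm x hs, ← lintegral_indicator hQ]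
    refine lintegral_mono fun z => ?_
    by_cases hz : z ∈ Q
    · have h1 : x + s • (z - x) ∈ Q := by
        have := hQc.add_smul_sub_mem (hEQ hx) hz ⟨hs.le, hs1⟩
        exact this
      have h2 : x + s • (z - x) ∈ Metric.closedBall x (s * d) := by
        rw [mem_closedBall_iff_norm, add_sub_cancel_left, norm_smul, Real.norm_of_nonneg hs.le]
        gcongr
        exact hd x (hEQ hx) z hz
      simp [hz, h1, h2]
    · simp [hz]
  have hm2 : Measurable (Function.uncurry fun x y : En n =>
      Q.indicator G y * (Metric.closedBall y (s * d)).indicator (1 : En n → ℝ≥0∞) x) := by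
    refine ((hG.indicator hQ).comp measurable_snd).mul ?_
    have hset : MeasurableSet {q : En n × En n | dist q.1 q.2 ≤ s * d} :=
      measurableSet_le (by fun_prop) (by fun_prop)
    exact measurable_one.indicator hset
  calc ∫⁻ x in E, ∫⁻ z in Q, G (x + s • (z - x))
      ≤ ∫⁻ x in E, ENNReal.ofReal ((s ^ n)⁻¹) *
        ∫⁻ y, Q.indicator G y * (Metric.closedBall y (s * d)).indicator 1 x :=
        setLIntegral_mono' hE key
    _ = ENNReal.ofReal ((s ^ n)⁻¹) * ∫⁻ y, Q.indicator G y *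
          volume (Metric.closedBall y (s * d) ∩ E) := by
        rw [lintegral_const_mul _ (Measurable.lintegral_prod_right hm2),
          lintegral_lintegral_swap hm2.aemeasurable]
        congr 1
        refine lintegral_congr fun y => ?_
        rw [lintegral_const_mul _ (measurable_one.indicator measurableSet_closedBall),
          lintegral_indicator_one measurableSet_closedBall,
          Measure.restrict_apply measurableSet_closedBall]
    _ = ∫⁻ y, Q.indicator G y * (ENNReal.ofReal ((s ^ n)⁻¹) *
          volume (Metric.closedBall y (s * d) ∩ E)) := by
        rw [← lintegral_const_mul' _ _ ENNReal.ofReal_ne_top]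
        refine lintegral_congr fun y => ?_
        ring
    _ ≤ ∫⁻ y, Q.indicator G y * min (ENNReal.ofReal ((s ^ n)⁻¹) * volume E)
        (ENNReal.ofReal (d ^ n) * volume (Metric.ball (0 : En n) 1)) := by
        refine lintegral_mono fun y => ?_
        refine mul_le_mul_right (le_min ?_ ?_) _
        · exact mul_le_mul_right (measure_mono inter_subset_right) _
        · refine (mul_le_mul_right (measure_mono inter_subset_left) _).trans ?_
          rw [Measure.addHaar_closedBall _ _ (by positivity), ← mul_assoc,
            ← ENNReal.ofReal_mul (by positivity)]
          refine le_of_eq ?_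
          congr 2
          simp only [finrank_euclideanSpace, Fintype.card_fin]
          rw [mul_pow]
          field_simp
    _ = _ := by
        rw [lintegral_mul_const _ (hG.indicator hQ), lintegral_indicator hQ, mul_comm]

/-- `∫₀¹ min (s⁻ⁿ V) (dⁿ ω) ds ≤ C d^{n-1} V^{1/n}`: split at `s = V^{1/n} / d`. -/
lemma lintegral_min_le {n : ℕ} (hn : 2 ≤ n) {d : ℝ} (hd : 0 < d) {V : ℝ≥0∞} (hV : V ≠ ∞)
    (w : ℝ≥0∞) :
    ∫⁻ s in Ioc (0 : ℝ) 1, min (ENNReal.ofReal ((s ^ n)⁻¹) * V) (ENNReal.ofReal (d ^ n) * w) ≤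
      (w + 1) * ENNReal.ofReal (d ^ (n - 1)) * V ^ (1 / (n : ℝ)) := by
  have hn0 : (0 : ℝ) < n := by positivity
  rcases eq_or_ne V 0 with rfl | hV0
  · simp
  set v : ℝ := V.toReal with hv
  have hvpos : 0 < v := ENNReal.toReal_pos hV0 hV
  have hVv : V = ENNReal.ofReal v := (ENNReal.ofReal_toReal hV).symm
  set r : ℝ := v ^ (1 / (n : ℝ)) with hr
  have hrpos : 0 < r := by positivity
  have hrn : r ^ n = v := by
    rw [hr, ← Real.rpow_natCast, ← Real.rpow_mul hvpos.le]
    field_simp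
    simp
  have hVr : V ^ (1 / (n : ℝ)) = ENNReal.ofReal r := by
    rw [hVv, ENNReal.ofReal_rpow_of_pos hvpos]
  set σ : ℝ := r / d with hσ
  have hσpos : 0 < σ := by positivity
  have hsub : Ioc (0 : ℝ) 1 ⊆ Ioc 0 σ ∪ Ioi σ := by
    intro s hs
    rcases le_or_gt s σ with h | h
    · exact Or.inl ⟨hs.1, h⟩
    · exact Or.inr h
  have hd1 : d ^ n = d ^ (n - 1) * d := by
    rw [← pow_succ]; congr 1; omega
  have hr1 : r ^ n = r ^ (n - 1) * r := by
    rw [← pow_succ]; congr 1; omega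
  have htail : ∫⁻ s in Ioi σ, ENNReal.ofReal ((s ^ n)⁻¹) ≤ ENNReal.ofReal ((σ ^ (n - 1))⁻¹) := by
    have hlt : -(n : ℝ) < -1 := by
      have : (2 : ℝ) ≤ n := by exact_mod_cast hn
      linarith
    have h1 : ∫⁻ s in Ioi σ, ENNReal.ofReal ((s ^ n)⁻¹) =
        ∫⁻ s in Ioi σ, ENNReal.ofReal (s ^ (-(n : ℝ))) := by
      refine setLIntegral_congr_fun measurableSet_Ioi fun s hs => ?_
      have : 0 < s := hσpos.trans hs
      simp only [Real.rpow_neg this.le, Real.rpow_natCast]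
    rw [h1, ← ofReal_integral_eq_lintegral_ofReal (integrableOn_Ioi_rpow_of_lt hlt hσpos)
      ((ae_restrict_iff' measurableSet_Ioi).2 (ae_of_all _ fun s hs =>
        Real.rpow_nonneg (hσpos.trans hs).le _)), integral_Ioi_rpow_of_lt hlt hσpos]
    refine ENNReal.ofReal_le_ofReal ?_
    have h2 : σ ^ (-(n : ℝ) + 1) = (σ ^ (n - 1))⁻¹ := by
      have : -(n : ℝ) + 1 = -((n - 1 : ℕ) : ℝ) := by
        rw [Nat.cast_sub (by omega)]; push_cast; ring
      rw [this, Real.rpow_neg hσpos.le, Real.rpow_natCast]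
    rw [h2]
    have h3 : (1 : ℝ) ≤ n - 1 := by
      have : (2 : ℝ) ≤ n := by exact_mod_cast hn
      linarith
    rw [show -(σ ^ (n - 1))⁻¹ / (-(n : ℝ) + 1) = (σ ^ (n - 1))⁻¹ / (n - 1) by
      rw [← neg_div_neg_eq]; congr 1 <;> ring]
    exact div_le_self (by positivity) h3
  calc _ ≤ ∫⁻ s in Ioc (0 : ℝ) σ ∪ Ioi σ,
        min (ENNReal.ofReal ((s ^ n)⁻¹) * V) (ENNReal.ofReal (d ^ n) * w) :=
        lintegral_mono_set hsub
    _ ≤ (∫⁻ s in Ioc (0 : ℝ) σ,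
          min (ENNReal.ofReal ((s ^ n)⁻¹) * V) (ENNReal.ofReal (d ^ n) * w)) +
        ∫⁻ s in Ioi σ, min (ENNReal.ofReal ((s ^ n)⁻¹) * V) (ENNReal.ofReal (d ^ n) * w) :=
        lintegral_union_le _ _ _
    _ ≤ (∫⁻ _ in Ioc (0 : ℝ) σ, ENNReal.ofReal (d ^ n) * w) +
        ∫⁻ s in Ioi σ, ENNReal.ofReal ((s ^ n)⁻¹) * V := by
        gcongr with s s
        · exact min_le_right _ _
        · exact min_le_left _ _
    _ ≤ ENNReal.ofReal (d ^ n) * w * ENNReal.ofReal σ + ENNReal.ofReal ((σ ^ (n - 1))⁻¹) * V := by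
        rw [setLIntegral_const, Real.volume_Ioc, sub_zero, lintegral_mul_const' _ _ hV]
        gcongr
    _ = w * (ENNReal.ofReal (d ^ n) * ENNReal.ofReal σ) +
          ENNReal.ofReal ((σ ^ (n - 1))⁻¹) * ENNReal.ofReal v := by rw [← hVv]; ring
    _ = w * ENNReal.ofReal (d ^ (n - 1) * r) + ENNReal.ofReal (d ^ (n - 1) * r) := by
        rw [← ENNReal.ofReal_mul (by positivity), ← ENNReal.ofReal_mul (by positivity)]
        have e1 : d ^ n * σ = d ^ (n - 1) * r := by
          rw [hd1, hσ]; field_simp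
        have e2 : (σ ^ (n - 1))⁻¹ * v = d ^ (n - 1) * r := by
          rw [← hrn, hr1, hσ, div_pow]; field_simp
        rw [e1, e2]
    _ = _ := by
        rw [hVr, ENNReal.ofReal_mul (by positivity)]
        ring

lemma lintegral_segment_swap {n : ℕ} {Q E : Set (En n)} {G : En n → ℝ≥0∞} (hG : Measurable G) :
    ∫⁻ x in E, ∫⁻ z in Q, ∫⁻ s in Ioc (0 : ℝ) 1, G (x + s • (z - x)) =
      ∫⁻ s in Ioc (0 : ℝ) 1, ∫⁻ x in E, ∫⁻ z in Q, G (x + s • (z - x)) := by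
  have h1 : ∀ x, ∫⁻ z in Q, ∫⁻ s in Ioc (0 : ℝ) 1, G (x + s • (z - x)) =
      ∫⁻ s in Ioc (0 : ℝ) 1, ∫⁻ z in Q, G (x + s • (z - x)) := by
    intro x
    refine lintegral_lintegral_swap (Measurable.aemeasurable ?_)
    exact hG.comp (by fun_prop : Measurable fun q : En n × ℝ => x + q.2 • (q.1 - x))
  simp_rw [h1]
  refine lintegral_lintegral_swap (Measurable.aemeasurable ?_)
  refine Measurable.lintegral_prod_right (f := fun (q : En n × ℝ) (z : En n) =>
    G (q.1 + q.2 • (z - q.1))) ?_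
  exact hG.comp
    (by fun_prop : Measurable fun q : (En n × ℝ) × En n => q.1.1 + q.1.2 • (q.2 - q.1.1))

/-- Sobolev-type inequality for pairs of points, from which every estimate below is derived. -/
lemma lintegral_lintegral_enorm_sub_le {n : ℕ} (hn : 2 ≤ n) {Q E : Set (En n)}
    (hQ : MeasurableSet Q) (hQc : Convex ℝ Q)
    {d : ℝ} (hd0 : 0 < d) (hd : ∀ x ∈ Q, ∀ z ∈ Q, ‖z - x‖ ≤ d) (hE : MeasurableSet E) (hEQ : E ⊆ Q)
    (hEtop : volume E ≠ ∞) {g : En n → ℝ} (hg : ContDiff ℝ 1 g) :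
    ∫⁻ x in E, ∫⁻ z in Q, ‖g x - g z‖ₑ ≤
      (volume (Metric.ball (0 : En n) 1) + 1) * ENNReal.ofReal (d ^ n) *
        volume E ^ (1 / (n : ℝ)) * ∫⁻ y in Q, ‖fderiv ℝ g y‖ₑ := by
  have hcont : Continuous (fderiv ℝ g) := hg.continuous_fderiv one_ne_zero
  have hG : Measurable fun y => ‖fderiv ℝ g y‖ₑ := hcont.enorm.measurable
  have hdn : d ^ n = d * d ^ (n - 1) := by
    rw [← pow_succ']; congr 1; omega
  calc ∫⁻ x in E, ∫⁻ z in Q, ‖g x - g z‖ₑ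
      ≤ ∫⁻ x in E, ∫⁻ z in Q, ENNReal.ofReal d * ∫⁻ s in Ioc (0 : ℝ) 1,
          ‖fderiv ℝ g (x + s • (z - x))‖ₑ := by
        refine setLIntegral_mono' hE fun x hx => setLIntegral_mono' hQ fun z hz => ?_
        refine (enorm_sub_le_lintegral_segment hg x z).trans ?_
        rw [← lintegral_const_mul' _ _ ENNReal.ofReal_ne_top]
        refine lintegral_mono fun s => mul_le_mul_left ?_ _
        rw [← ofReal_norm]
        exact ENNReal.ofReal_le_ofReal (hd x (hEQ hx) z hz)
    _ = ENNReal.ofReal d * ∫⁻ s in Ioc (0 : ℝ) 1, ∫⁻ x in E, ∫⁻ z in Q,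
          ‖fderiv ℝ g (x + s • (z - x))‖ₑ := by
        simp_rw [lintegral_const_mul' _ _ (ENNReal.ofReal_ne_top (r := d))]
        rw [lintegral_segment_swap hG]
    _ ≤ ENNReal.ofReal d * ∫⁻ s in Ioc (0 : ℝ) 1, min (ENNReal.ofReal ((s ^ n)⁻¹) * volume E)
        (ENNReal.ofReal (d ^ n) * volume (Metric.ball (0 : En n) 1)) *
          ∫⁻ y in Q, ‖fderiv ℝ g y‖ₑ := by
        refine mul_le_mul_right (setLIntegral_mono' measurableSet_Ioc fun s hs => ?_) _
        exact lintegral_segment_le hQ hQc hd0.le hd hE hEQ hG hs.1 hs.2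
    _ = ENNReal.ofReal d * ((∫⁻ s in Ioc (0 : ℝ) 1, min (ENNReal.ofReal ((s ^ n)⁻¹) * volume E)
        (ENNReal.ofReal (d ^ n) * volume (Metric.ball (0 : En n) 1))) *
          ∫⁻ y in Q, ‖fderiv ℝ g y‖ₑ) := by
        rw [lintegral_mul_const]
        fun_prop
    _ ≤ ENNReal.ofReal d * (((volume (Metric.ball (0 : En n) 1) + 1) *
          ENNReal.ofReal (d ^ (n - 1)) * volume E ^ (1 / (n : ℝ))) *
          ∫⁻ y in Q, ‖fderiv ℝ g y‖ₑ) := by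
        gcongr
        exact lintegral_min_le hn hd0 hEtop _
    _ = _ := by
        rw [hdn, ENNReal.ofReal_mul hd0.le]
        ring

/-! ### Geometry of cubes -/

lemma cube_eq_preimage {n : ℕ} (a : En n) (h : ℝ) :
    cube a h = Set.preimage (WithLp.ofLp : En n → Fin n → ℝ) (Icc (fun i => a i) (fun i => a i + h)) := by
  ext y
  simp [cube, Pi.le_def, forall_and]

lemma measurableSet_cube {n : ℕ} (a : En n) (h : ℝ) : MeasurableSet (cube a h) := by
  rw [cube_eq_preimage]
  exact (PiLp.volume_preserving_ofLp (Fin n)).measurable measurableSet_Icc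

lemma volume_cube {n : ℕ} (a : En n) {h : ℝ} (hh : 0 < h) :
    volume (cube a h) = ENNReal.ofReal (h ^ n) := by
  rw [cube_eq_preimage, (PiLp.volume_preserving_ofLp (Fin n)).measure_preimage
    measurableSet_Icc.nullMeasurableSet, Real.volume_Icc_pi]
  simp [ENNReal.ofReal_pow hh.le]

lemma convex_cube {n : ℕ} (a : En n) (h : ℝ) : Convex ℝ (cube a h) := by
  rw [cube_eq_preimage]
  exact (convex_Icc _ _).linear_preimage (WithLp.linearEquiv 2 ℝ (Fin n → ℝ)).toLinearMap

lemma norm_sub_le_of_mem_cube {n : ℕ} {a : En n} {h : ℝ} (hh : 0 < h) {x z : En n}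
    (hx : x ∈ cube a h) (hz : z ∈ cube a h) : ‖z - x‖ ≤ n * h := by
  rw [EuclideanSpace.norm_eq]
  refine Real.sqrt_le_iff.2 ⟨by positivity, ?_⟩
  calc ∑ i, ‖(z - x) i‖ ^ 2 ≤ ∑ _i : Fin n, h ^ 2 := by
        refine Finset.sum_le_sum fun i _ => ?_
        refine pow_le_pow_left₀ (norm_nonneg _) ?_ 2
        rw [Real.norm_eq_abs, PiLp.sub_apply, abs_le]
        have h1 := hx i
        have h2 := hz i
        constructor <;> linarith
    _ = n * h ^ 2 := by simp
    _ ≤ (n * h) ^ 2 := by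
        rw [mul_pow]
        gcongr
        norm_cast
        exact Nat.le_self_pow two_ne_zero n

lemma isCompact_cube {n : ℕ} (a : En n) (h : ℝ) : IsCompact (cube a h) := by
  rw [cube_eq_preimage]
  exact (PiLp.homeomorph 2 (fun _ : Fin n => ℝ)).isCompact_preimage.2 isCompact_Icc

/-! ### Truncation -/

/-- A smooth even cutoff: `0` on `|r| ≤ t` and `1` on `|r| ≥ 2t`, with slope at most `M / t`. -/
lemma exists_cutoff : ∃ M : ℝ, 0 < M ∧ ∀ t : ℝ, 0 < t → ∃ T : ℝ → ℝ, ContDiff ℝ 1 T ∧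
    (∀ r, |r| ≤ t → T r = 0) ∧ (∀ r, 2 * t ≤ |r| → T r = 1) ∧
    (∀ r, ¬ (t < |r| ∧ |r| ≤ 2 * t) → deriv T r = 0) ∧
    (∀ r, t < |r| ∧ |r| ≤ 2 * t → |deriv T r| ≤ M / t) := by
  have hS : ContDiff ℝ 1 Real.smoothTransition := Real.smoothTransition.contDiff (n := 1)
  obtain ⟨M, hM⟩ := (isCompact_Icc (a := (0 : ℝ)) (b := 1)).exists_bound_of_continuousOn
    (hS.continuous_deriv le_rfl).continuousOn
  have hM0 : 0 ≤ M := (norm_nonneg _).trans (hM 0 (by simp))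
  refine ⟨2 * M + 1, by positivity, fun t ht => ?_⟩
  set φ : ℝ → ℝ := fun r => (r ^ 2 - t ^ 2) / (3 * t ^ 2) with hφ
  have hφd : ∀ r, HasDerivAt φ (2 * r / (3 * t ^ 2)) r := by
    intro r
    have := (((hasDerivAt_id r).pow 2).sub_const (t ^ 2)).div_const (3 * t ^ 2)
    simpa using this
  have hφc : ContDiff ℝ 1 φ := by
    have : φ = fun r => (r ^ 2 - t ^ 2) * (3 * t ^ 2)⁻¹ := by
      ext r; simp [hφ, div_eq_mul_inv]
    rw [this]
    fun_prop
  have h0 : ∀ r, |r| ≤ t → Real.smoothTransition (φ r) = 0 := by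
    intro r hr
    refine Real.smoothTransition.zero_of_nonpos (div_nonpos_of_nonpos_of_nonneg ?_ (by positivity))
    have := sq_le_sq' (by linarith [neg_abs_le r]) ((le_abs_self r).trans hr)
    linarith
  have h1 : ∀ r, 2 * t ≤ |r| → Real.smoothTransition (φ r) = 1 := by
    intro r hr
    refine Real.smoothTransition.one_of_one_le ?_
    rw [hφ, le_div_iff₀ (by positivity)]
    have : (2 * t) ^ 2 ≤ |r| ^ 2 := pow_le_pow_left₀ (by positivity) hr 2
    rw [sq_abs] at this
    linarith
  refine ⟨fun r => Real.smoothTransition (φ r), hS.comp hφc, h0, h1, ?_, ?_⟩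
  · intro r hr
    by_cases hr1 : |r| ≤ t
    · -- `r` is a global minimum of the cutoff
      refine IsLocalMin.deriv_eq_zero (Eventually.of_forall fun y => ?_)
      simp only [h0 r hr1]
      exact Real.smoothTransition.nonneg _
    · -- `r` is a global maximum of the cutoff
      have hr2 : 2 * t ≤ |r| := by
        by_contra hcon
        exact hr ⟨by linarith, by linarith⟩
      refine IsLocalMax.deriv_eq_zero (Eventually.of_forall fun y => ?_)
      simp only [h1 r hr2]
      exact Real.smoothTransition.le_one _
  · intro r hr
    have hder : HasDerivAt (fun r => Real.smoothTransition (φ r))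
        (deriv Real.smoothTransition (φ r) * (2 * r / (3 * t ^ 2))) r :=
      ((hS.differentiable one_ne_zero _).hasDerivAt).comp r (hφd r)
    have ha : t ^ 2 ≤ r ^ 2 := by
      rw [← sq_abs r]; exact pow_le_pow_left₀ ht.le hr.1.le 2
    have hb : r ^ 2 ≤ (2 * t) ^ 2 := by
      rw [← sq_abs r]; exact pow_le_pow_left₀ (abs_nonneg r) hr.2 2
    have hφm : φ r ∈ Icc (0 : ℝ) 1 := by
      constructor
      · exact div_nonneg (by linarith) (by positivity)
      · rw [hφ, div_le_one (by positivity)]; linarith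
    have hM1 := hM _ hφm
    rw [Real.norm_eq_abs] at hM1
    rw [hder.deriv, abs_mul, abs_div, abs_mul, abs_two, abs_of_pos (by positivity : 0 < 3 * t ^ 2)]
    have h3 : 2 * |r| / (3 * t ^ 2) ≤ 2 / t := by
      rw [div_le_div_iff₀ (by positivity) ht]
      nlinarith [hr.2]
    calc _ ≤ M * (2 / t) := by gcongr
      _ ≤ (2 * M + 1) / t := by
        rw [← mul_div_assoc]; gcongr; linarith

/-- The weak-type estimate on one layer: the truncation method applied to the inequality `hB`. -/
lemma layer_estimate {n : ℕ} {μ : Measure (En n)} [IsProbabilityMeasure μ] {B : ℝ≥0∞}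
    (hB : ∀ g : En n → ℝ, ContDiff ℝ 1 g → ∀ E, MeasurableSet E →
      ∫⁻ x in E, ∫⁻ z, ‖g x - g z‖ₑ ∂μ ∂μ ≤ B * μ E ^ (1 / (n : ℝ)) * ∫⁻ y, ‖fderiv ℝ g y‖ₑ ∂μ)
    {u : En n → ℝ} (hu : ContDiff ℝ 1 u) {t M : ℝ} (ht : 0 < t) (hM0 : 0 < M) {T : ℝ → ℝ}
    (hT : ContDiff ℝ 1 T)
    (hT0 : ∀ r, |r| ≤ t → T r = 0) (hT1 : ∀ r, 2 * t ≤ |r| → T r = 1)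
    (hTd0 : ∀ r, ¬ (t < |r| ∧ |r| ≤ 2 * t) → deriv T r = 0)
    (hTd : ∀ r, t < |r| ∧ |r| ≤ 2 * t → |deriv T r| ≤ M / t)
    (hhalf : μ {x | t < |u x|} ≤ 1 / 2) :
    ENNReal.ofReal t * μ {x | 2 * t < |u x|} ≤
      2 * ENNReal.ofReal M * B * μ {x | 2 * t < |u x|} ^ (1 / (n : ℝ)) *
        ∫⁻ y in {y | t < |u y| ∧ |u y| ≤ 2 * t}, ‖fderiv ℝ u y‖ₑ ∂μ := by
  have huc : Continuous u := hu.continuous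
  have hE : MeasurableSet {x | 2 * t < |u x|} :=
    measurableSet_lt measurable_const huc.abs.measurable
  have hA1 : MeasurableSet {x | t < |u x|} :=
    measurableSet_lt measurable_const huc.abs.measurable
  have hA : MeasurableSet {y | t < |u y| ∧ |u y| ≤ 2 * t} :=
    hA1.inter (measurableSet_le huc.abs.measurable measurable_const)
  have hder : ∀ y, ‖fderiv ℝ (fun x => T (u x)) y‖ₑ ≤ ENNReal.ofReal (M / t) *
      {y | t < |u y| ∧ |u y| ≤ 2 * t}.indicator (fun y => ‖fderiv ℝ u y‖ₑ) y := by
    intro y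
    have h1 : HasFDerivAt (fun x => T (u x)) (deriv T (u y) • fderiv ℝ u y) y :=
      ((hT.differentiable one_ne_zero (u y)).hasDerivAt).comp_hasFDerivAt y
        (hu.differentiable one_ne_zero y).hasFDerivAt
    rw [h1.fderiv, enorm_smul]
    by_cases hy : t < |u y| ∧ |u y| ≤ 2 * t
    · rw [indicator_of_mem (show y ∈ {y | t < |u y| ∧ |u y| ≤ 2 * t} from hy)]
      gcongr
      rw [← ofReal_norm, Real.norm_eq_abs]
      exact ENNReal.ofReal_le_ofReal (hTd _ hy)
    · rw [hTd0 _ hy]; simp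
  have hgrad : ∫⁻ y, ‖fderiv ℝ (fun x => T (u x)) y‖ₑ ∂μ ≤ ENNReal.ofReal (M / t) *
      ∫⁻ y in {y | t < |u y| ∧ |u y| ≤ 2 * t}, ‖fderiv ℝ u y‖ₑ ∂μ := by
    rw [← lintegral_indicator hA, ← lintegral_const_mul' _ _ ENNReal.ofReal_ne_top]
    exact lintegral_mono hder
  have hlow : μ {x | 2 * t < |u x|} * (1 / 2) ≤
      ∫⁻ x in {x | 2 * t < |u x|}, ∫⁻ z, ‖T (u x) - T (u z)‖ₑ ∂μ ∂μ := by
    have hZ : (1 / 2 : ℝ≥0∞) ≤ μ {x | t < |u x|}ᶜ := by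
      rw [prob_compl_eq_one_sub hA1]
      calc (1 / 2 : ℝ≥0∞) = 1 - 1 / 2 := by simp
        _ ≤ _ := tsub_le_tsub_left hhalf 1
    calc μ {x | 2 * t < |u x|} * (1 / 2) = ∫⁻ _ in {x | 2 * t < |u x|}, (1 / 2) ∂μ := by
          rw [setLIntegral_const, mul_comm]
      _ ≤ _ := by
          refine setLIntegral_mono' hE fun x hx => ?_
          calc (1 / 2 : ℝ≥0∞) ≤ μ {x | t < |u x|}ᶜ := hZ
            _ = ∫⁻ z in {x | t < |u x|}ᶜ, 1 ∂μ := by simp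
            _ ≤ ∫⁻ z in {x | t < |u x|}ᶜ, ‖T (u x) - T (u z)‖ₑ ∂μ := by
                refine setLIntegral_mono' hA1.compl fun z hz => ?_
                have hz' : |u z| ≤ t := by simpa using hz
                rw [hT1 _ (le_of_lt hx), hT0 _ hz']
                simp
            _ ≤ _ := setLIntegral_le_lintegral _ _
  have hmain := hB _ (hT.comp hu) _ hE
  simp only [Function.comp_def] at hmain
  have h3 := hlow.trans (hmain.trans (mul_le_mul_right hgrad _))
  have e1 : ENNReal.ofReal t * ENNReal.ofReal (M / t) = ENNReal.ofReal M := by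
    rw [← ENNReal.ofReal_mul ht.le]; congr 1; field_simp
  calc ENNReal.ofReal t * μ {x | 2 * t < |u x|}
      = 2 * ENNReal.ofReal t * (μ {x | 2 * t < |u x|} * (1 / 2)) := by
        rw [mul_comm (μ _) (1 / 2), mul_assoc, mul_left_comm, ← mul_assoc (2 : ℝ≥0∞), one_div,
          ENNReal.mul_inv_cancel two_ne_zero ENNReal.ofNat_ne_top, one_mul]
    _ ≤ 2 * ENNReal.ofReal t * _ := mul_le_mul_right h3 _
    _ = 2 * (ENNReal.ofReal t * ENNReal.ofReal (M / t)) * B *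
        μ {x | 2 * t < |u x|} ^ (1 / (n : ℝ)) *
        ∫⁻ y in {y | t < |u y| ∧ |u y| ≤ 2 * t}, ‖fderiv ℝ u y‖ₑ ∂μ := by ring
    _ = _ := by rw [e1]

lemma lintegral_le_rpow_mul_measure {α : Type*} [MeasurableSpace α] (ν : Measure α) {p : ℝ}
    (hp : 1 ≤ p) {G : α → ℝ≥0∞} (hG : Measurable G) :
    ∫⁻ x, G x ∂ν ≤ (∫⁻ x, G x ^ p ∂ν) ^ (1 / p) * ν univ ^ (1 - 1 / p) := by
  rcases hp.eq_or_lt with rfl | hp1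
  · simp
  · have h1 := ENNReal.lintegral_mul_le_Lp_mul_Lq ν (Real.HolderConjugate.conjExponent hp1)
      hG.aemeasurable (aemeasurable_const (b := (1 : ℝ≥0∞)))
    have h2 : 1 / p.conjExponent = 1 - 1 / p := by
      rw [Real.conjExponent]
      have : p - 1 ≠ 0 := by linarith
      have : p ≠ 0 := by linarith
      field_simp
    simpa [h2] using h1

/-- Either the distribution function drops by the factor `ε` between two consecutive levels, or
the layer estimate can be divided by a power of `lam2`. -/
lemma dichotomy {n : ℕ} {p s : ℝ} (hp : 1 ≤ p) (hs : 0 < s) (hsp : 1 / s = 1 / p - 1 / (n : ℝ))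
    {τ K lam1 lam2 G : ℝ≥0∞} {ε : ℝ≥0∞} (hε0 : ε ≠ 0) (hε1 : ε ≤ 1)
    (hl2 : lam2 ≠ ∞)
    (hyp : τ * lam2 ≤ K * lam2 ^ (1 / (n : ℝ)) * (G ^ (1 / p) * lam1 ^ (1 - 1 / p))) :
    (τ * lam2 ^ (1 / s)) ^ p ≤ (K * ε⁻¹) ^ p * G + ε ^ (p / s) * (τ * lam1 ^ (1 / s)) ^ p := by
  have hp0 : 0 < p := by linarith
  have hεt : ε ≠ ∞ := ne_top_of_le_ne_top one_ne_top hε1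
  rcases le_total lam2 (ε * lam1) with hle | hle
  · refine le_add_left ?_
    calc (τ * lam2 ^ (1 / s)) ^ p ≤ (τ * (ε * lam1) ^ (1 / s)) ^ p := by gcongr
      _ = _ := by
        rw [ENNReal.mul_rpow_of_nonneg _ _ (by positivity : 0 ≤ 1 / s), mul_left_comm,
          ENNReal.mul_rpow_of_nonneg _ _ hp0.le, ← ENNReal.rpow_mul]
        congr 2
        ring
  · refine le_add_right ?_
    rcases eq_or_ne lam2 0 with h0 | h0
    · have : (0 : ℝ≥0∞) ^ (1 / s) = 0 := ENNReal.zero_rpow_of_pos (by positivity)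
      rw [h0, this, mul_zero, ENNReal.zero_rpow_of_pos hp0]
      exact zero_le
    have hq0 : 0 ≤ 1 - 1 / p := by
      rw [sub_nonneg, div_le_one hp0]; exact hp
    have hq1 : 1 - 1 / p ≤ 1 := by
      have : 0 < 1 / p := by positivity
      linarith
    have h1 : lam1 ≤ ε⁻¹ * lam2 := by
      rw [← ENNReal.div_eq_inv_mul, ENNReal.le_div_iff_mul_le (Or.inl hε0) (Or.inl hεt), mul_comm]
      exact hle
    have h2 : lam1 ^ (1 - 1 / p) ≤ ε⁻¹ * lam2 ^ (1 - 1 / p) := by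
      calc lam1 ^ (1 - 1 / p) ≤ (ε⁻¹ * lam2) ^ (1 - 1 / p) := by gcongr
        _ = ε⁻¹ ^ (1 - 1 / p) * lam2 ^ (1 - 1 / p) := ENNReal.mul_rpow_of_nonneg _ _ hq0
        _ ≤ ε⁻¹ ^ (1 : ℝ) * lam2 ^ (1 - 1 / p) := by
            gcongr
            exact ENNReal.one_le_inv.2 hε1
        _ = _ := by rw [ENNReal.rpow_one]
    have h3 : τ * lam2 ^ (1 / s) ≤ K * ε⁻¹ * G ^ (1 / p) := by
      have e1 : lam2 ^ (1 / s) = lam2 * lam2 ^ (-(1 / (n : ℝ) + (1 - 1 / p))) := by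
        conv_rhs => rw [← ENNReal.rpow_one lam2, ← ENNReal.rpow_mul, one_mul,
          ← ENNReal.rpow_add _ _ h0 hl2]
        congr 1
        rw [hsp]; ring
      have e2 : lam2 ^ (1 / (n : ℝ)) * lam2 ^ (1 - 1 / p) *
          lam2 ^ (-(1 / (n : ℝ) + (1 - 1 / p))) = 1 := by
        rw [← ENNReal.rpow_add _ _ h0 hl2, ← ENNReal.rpow_add _ _ h0 hl2, add_neg_cancel,
          ENNReal.rpow_zero]
      calc τ * lam2 ^ (1 / s) = τ * lam2 * lam2 ^ (-(1 / (n : ℝ) + (1 - 1 / p))) := by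
            rw [e1]; ring
        _ ≤ K * lam2 ^ (1 / (n : ℝ)) * (G ^ (1 / p) * (ε⁻¹ * lam2 ^ (1 - 1 / p))) *
            lam2 ^ (-(1 / (n : ℝ) + (1 - 1 / p))) := by
            refine mul_le_mul_left (hyp.trans ?_) _
            gcongr
        _ = K * ε⁻¹ * G ^ (1 / p) * (lam2 ^ (1 / (n : ℝ)) * lam2 ^ (1 - 1 / p) *
            lam2 ^ (-(1 / (n : ℝ) + (1 - 1 / p)))) := by ring
        _ = _ := by rw [e2, mul_one]
    calc (τ * lam2 ^ (1 / s)) ^ p ≤ (K * ε⁻¹ * G ^ (1 / p)) ^ p := by gcongr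
      _ = _ := by
        rw [ENNReal.mul_rpow_of_nonneg _ _ hp0.le, ← ENNReal.rpow_mul, one_div_mul_cancel hp0.ne',
          ENNReal.rpow_one]

/-! ### Integration over the levels -/

lemma lintegral_Ioi_two_mul (F : ℝ → ℝ≥0∞) (b : ℝ) :
    ∫⁻ t in Ioi (2 * b), F t = ∫⁻ t in Ioi b, 2 * F (2 * t) := by
  have himg : (fun t : ℝ => 2 * t) '' Ioi b = Ioi (2 * b) := by
    ext y
    simp only [mem_image, mem_Ioi]
    constructor
    · rintro ⟨x, hx, rfl⟩; linarith
    · intro hy; exact ⟨y / 2, by linarith, by ring⟩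
  rw [← himg, lintegral_image_eq_lintegral_abs_deriv_mul (f' := fun _ => 2) measurableSet_Ioi
    (fun x _ => by simpa using ((hasDerivAt_id x).const_mul 2).hasDerivWithinAt)
    (fun x _ y _ hxy => by simpa using hxy)]
  simp

/-- The layers `t < |u| ≤ 2t` overlap boundedly with respect to `dt / t`. -/
lemma lintegral_layers_le {α : Type*} [MeasurableSpace α] (μ : Measure α) [SFinite μ]
    {u : α → ℝ} (hu : Measurable u) {G : α → ℝ≥0∞} (hG : Measurable G) :
    ∫⁻ t in Ioi (0 : ℝ), (∫⁻ y in {y | t < |u y| ∧ |u y| ≤ 2 * t}, G y ∂μ) *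
      (ENNReal.ofReal t)⁻¹ ≤ ∫⁻ y, G y ∂μ := by
  have hset : MeasurableSet {q : ℝ × α | q.1 < |u q.2| ∧ |u q.2| ≤ 2 * q.1} := by
    have h1 : Measurable fun q : ℝ × α => |u q.2| := (hu.comp measurable_snd).abs
    exact (measurableSet_lt measurable_fst h1).inter
      (measurableSet_le h1 (measurable_fst.const_mul 2))
  have hA : ∀ t : ℝ, MeasurableSet {y | t < |u y| ∧ |u y| ≤ 2 * t} := fun t =>
    (measurableSet_lt measurable_const hu.abs).inter (measurableSet_le hu.abs measurable_const)
  have hm : Measurable (Function.uncurry fun (t : ℝ) (y : α) =>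
      {y | t < |u y| ∧ |u y| ≤ 2 * t}.indicator G y * (ENNReal.ofReal t)⁻¹) := by
    refine Measurable.mul ?_ (by fun_prop)
    exact (hG.comp measurable_snd).indicator hset
  calc _ = ∫⁻ t in Ioi (0 : ℝ), ∫⁻ y, {y | t < |u y| ∧ |u y| ≤ 2 * t}.indicator G y *
        (ENNReal.ofReal t)⁻¹ ∂μ := by
        refine lintegral_congr fun t => ?_
        rw [lintegral_mul_const _ (hG.indicator (hA t)), lintegral_indicator (hA t)]
    _ = ∫⁻ y, (∫⁻ t in Ioi (0 : ℝ), {y | t < |u y| ∧ |u y| ≤ 2 * t}.indicator G y *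
        (ENNReal.ofReal t)⁻¹) ∂μ := lintegral_lintegral_swap hm.aemeasurable
    _ ≤ ∫⁻ y, G y ∂μ := by
        refine lintegral_mono fun y => ?_
        rcases (abs_nonneg (u y)).eq_or_lt with h0 | h0
        · refine (le_of_eq ?_).trans zero_le
          rw [setLIntegral_eq_zero measurableSet_Ioi]
          intro t ht
          have : y ∉ {y | t < |u y| ∧ |u y| ≤ 2 * t} := by
            rintro ⟨h1, _⟩
            rw [← h0] at h1
            exact lt_asymm h1 ht
          simp [this]
        · calc _ ≤ ∫⁻ t in Ioi (0 : ℝ), (Ico (|u y| / 2) |u y|).indicator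
                (fun _ => G y * (ENNReal.ofReal (|u y| / 2))⁻¹) t := by
                refine lintegral_mono fun t => ?_
                by_cases hy : t < |u y| ∧ |u y| ≤ 2 * t
                · have ht : t ∈ Ico (|u y| / 2) |u y| := ⟨by linarith [hy.2], hy.1⟩
                  rw [indicator_of_mem ht,
                    indicator_of_mem (show y ∈ {y | t < |u y| ∧ |u y| ≤ 2 * t} from hy)]
                  gcongr
                  exact ht.1
                · rw [indicator_of_notMem (show y ∉ {y | t < |u y| ∧ |u y| ≤ 2 * t} from hy)]
                  simp
            _ ≤ ∫⁻ t, (Ico (|u y| / 2) |u y|).indicator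
                (fun _ => G y * (ENNReal.ofReal (|u y| / 2))⁻¹) t :=
                setLIntegral_le_lintegral _ _
            _ = G y := by
                rw [lintegral_indicator_const measurableSet_Ico, Real.volume_Ico, _root_.sub_half,
                  mul_assoc, ENNReal.inv_mul_cancel, mul_one]
                · simpa using h0
                · exact ENNReal.ofReal_ne_top

lemma lintegral_Ioc_le_rpow {p : ℝ} (hp : 1 ≤ p) {R : ℝ} (hR : 0 ≤ R) {a : ℝ → ℝ≥0∞}
    (ha : ∀ t, a t ≤ 1) :
    ∫⁻ t in Ioc (0 : ℝ) R, (ENNReal.ofReal t * a t) ^ p * (ENNReal.ofReal t)⁻¹ ≤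
      ENNReal.ofReal R ^ p := by
  have key : ∀ x : ℝ≥0∞, x ≠ 0 → x ≠ ∞ → x ^ p * x⁻¹ = x ^ (p - 1) := by
    intro x h0 ht
    rw [← ENNReal.rpow_neg_one, ← ENNReal.rpow_add _ _ h0 ht]; rfl
  have hb : ∀ t ∈ Ioc (0 : ℝ) R, (ENNReal.ofReal t * a t) ^ p * (ENNReal.ofReal t)⁻¹ ≤
      ENNReal.ofReal R ^ (p - 1) := by
    intro t ht
    calc _ ≤ (ENNReal.ofReal t * 1) ^ p * (ENNReal.ofReal t)⁻¹ := by
          gcongr; exact ha t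
      _ = ENNReal.ofReal t ^ (p - 1) := by
          rw [mul_one, key _ (by simpa using ht.1) ENNReal.ofReal_ne_top]
      _ ≤ _ := ENNReal.rpow_le_rpow (ENNReal.ofReal_le_ofReal ht.2) (by linarith)
  refine (setLIntegral_mono' measurableSet_Ioc hb).trans ?_
  rw [setLIntegral_const, Real.volume_Ioc, sub_zero]
  rcases hR.eq_or_lt with rfl | hR
  · simp
  · have h0 : ENNReal.ofReal R ≠ 0 := by simpa using hR
    refine le_of_eq ?_
    conv_lhs => rw [← ENNReal.rpow_one (ENNReal.ofReal R), ← ENNReal.rpow_mul, one_mul,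
      ← ENNReal.rpow_add _ _ h0 ENNReal.ofReal_ne_top]
    congr 1; ring

/-- The Lorentz integral bound for a probability measure satisfying the pair inequality `hB`. -/
lemma lorentz_integral_le {n : ℕ} {p s : ℝ} (hp : 1 ≤ p) (hs : 0 < s)
    (hsp : 1 / s = 1 / p - 1 / (n : ℝ)) :
    ∃ c : ℝ≥0∞, c ≠ ∞ ∧ ∀ (μ : Measure (En n)) [IsProbabilityMeasure μ] (B : ℝ≥0∞),
      B ≠ ∞ →
      (∀ g : En n → ℝ, ContDiff ℝ 1 g → ∀ E, MeasurableSet E →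
        ∫⁻ x in E, ∫⁻ z, ‖g x - g z‖ₑ ∂μ ∂μ ≤
          B * μ E ^ (1 / (n : ℝ)) * ∫⁻ y, ‖fderiv ℝ g y‖ₑ ∂μ) →
      ∀ u : En n → ℝ, ContDiff ℝ 1 u →
      ∫⁻ y, ‖u y‖ₑ ∂μ ≤ B * ∫⁻ y, ‖fderiv ℝ u y‖ₑ ∂μ →
      (∃ R : ℝ, 0 ≤ R ∧ ∀ᵐ y ∂μ, |u y| ≤ R) →
      ∫⁻ y, ‖fderiv ℝ u y‖ₑ ^ p ∂μ ≠ ∞ →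
      ∫⁻ t in Ioi (0 : ℝ), (ENNReal.ofReal t * μ {x | t < |u x|} ^ (1 / s)) ^ p *
        (ENNReal.ofReal t)⁻¹ ≤ c * B ^ p * ∫⁻ y, ‖fderiv ℝ u y‖ₑ ^ p ∂μ := by
  have hp0 : 0 < p := by linarith
  obtain ⟨M, hM0, hM⟩ := exists_cutoff
  -- chosen so that `2 ^ p * ε ^ (p / s) = 1 / 2`
  set ε : ℝ≥0∞ := (2 * 2 ^ p)⁻¹ ^ (s / p) with hε
  have h2p0 : (2 * 2 ^ p : ℝ≥0∞) ≠ 0 := by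
    simp [hp0]
  have h2pt : (2 * 2 ^ p : ℝ≥0∞) ≠ ∞ :=
    ENNReal.mul_ne_top ENNReal.ofNat_ne_top (ENNReal.rpow_ne_top_of_nonneg hp0.le
      ENNReal.ofNat_ne_top)
  have hε0 : ε ≠ 0 := by
    rw [hε]
    exact (ENNReal.rpow_pos (ENNReal.inv_pos.2 h2pt) (ENNReal.inv_ne_top.2 h2p0)).ne'
  have hε1 : ε ≤ 1 := by
    refine ENNReal.rpow_le_one (ENNReal.inv_le_one.2 ?_) (by positivity)
    calc (1 : ℝ≥0∞) ≤ 2 * 1 := by norm_num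
      _ ≤ 2 * 2 ^ p := by gcongr; exact ENNReal.one_le_rpow (by norm_num) hp0
  have hεp : 2 ^ p * ε ^ (p / s) = 2⁻¹ := by
    rw [hε, ← ENNReal.rpow_mul, show s / p * (p / s) = 1 by field_simp, ENNReal.rpow_one,
      ENNReal.mul_inv (Or.inl two_ne_zero) (Or.inl ENNReal.ofNat_ne_top), mul_left_comm,
      ENNReal.mul_inv_cancel, mul_one]
    · intro h; apply h2p0; rw [h, mul_zero]
    · exact ENNReal.rpow_ne_top_of_nonneg hp0.le ENNReal.ofNat_ne_top
  refine ⟨2 * (4 ^ p + 2 ^ p * (2 * ENNReal.ofReal M * ε⁻¹) ^ p), ?_, ?_⟩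
  · have h1 : (2 * ENNReal.ofReal M * ε⁻¹) ≠ ∞ :=
      ENNReal.mul_ne_top (ENNReal.mul_ne_top ENNReal.ofNat_ne_top ENNReal.ofReal_ne_top)
        (ENNReal.inv_ne_top.2 hε0)
    exact ENNReal.mul_ne_top ENNReal.ofNat_ne_top (ENNReal.add_ne_top.2
      ⟨ENNReal.rpow_ne_top_of_nonneg hp0.le ENNReal.ofNat_ne_top,
        ENNReal.mul_ne_top (ENNReal.rpow_ne_top_of_nonneg hp0.le ENNReal.ofNat_ne_top)
          (ENNReal.rpow_ne_top_of_nonneg hp0.le h1)⟩)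
  intro μ _ B hBt hB u hu hpoin hbdd hfin
  obtain ⟨R, hR0, hR⟩ := hbdd
  have huc : Continuous u := hu.continuous
  have hGm : Measurable fun y => ‖fderiv ℝ u y‖ₑ :=
    (hu.continuous_fderiv one_ne_zero).enorm.measurable
  set D : ℝ≥0∞ := ∫⁻ y, ‖fderiv ℝ u y‖ₑ ^ p ∂μ with hD
  set lam : ℝ → ℝ≥0∞ := fun t => μ {x | t < |u x|} with hlam
  have hlam1 : ∀ t, lam t ^ (1 / s) ≤ 1 := fun t =>
    ENNReal.rpow_le_one prob_le_one (by positivity)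
  set F : ℝ → ℝ≥0∞ := fun t => (ENNReal.ofReal t * lam t ^ (1 / s)) ^ p * (ENNReal.ofReal t)⁻¹
    with hF
  set Gt : ℝ → ℝ≥0∞ := fun t => ∫⁻ y in {y | t < |u y| ∧ |u y| ≤ 2 * t}, ‖fderiv ℝ u y‖ₑ ^ p ∂μ
    with hGt
  have hlamm : Measurable lam := by
    refine Antitone.measurable fun a b hab => measure_mono fun x hx => ?_
    exact lt_of_le_of_lt hab hx
  have hFm : Measurable F := by
    refine Measurable.mul (Measurable.pow_const (Measurable.mul (by fun_prop) ?_) _) (by fun_prop)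
    exact hlamm.pow_const _
  set t0 : ℝ := (2 * B * D ^ (1 / p)).toReal with ht0
  have hDt : D ^ (1 / p) ≠ ∞ := ENNReal.rpow_ne_top_of_nonneg (by positivity) hfin
  have ht0e : ENNReal.ofReal t0 = 2 * B * D ^ (1 / p) :=
    ENNReal.ofReal_toReal (ENNReal.mul_ne_top (ENNReal.mul_ne_top ENNReal.ofNat_ne_top hBt) hDt)
  have ht00 : 0 ≤ t0 := ENNReal.toReal_nonneg
  -- Chebyshev together with the Poincaré inequality
  have hhalf : ∀ t, t0 < t → lam t ≤ 1 / 2 := by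
    intro t ht
    have htpos : 0 < t := ht00.trans_lt ht
    have h1 : ENNReal.ofReal t * lam t ≤ ∫⁻ y, ‖u y‖ₑ ∂μ := by
      refine le_trans ?_ (mul_meas_ge_le_lintegral huc.enorm.measurable (ENNReal.ofReal t))
      refine mul_le_mul_right (measure_mono fun x hx => ?_) _
      simp only [mem_ofPred_eq] at hx ⊢
      rw [← ofReal_norm, Real.norm_eq_abs]
      exact ENNReal.ofReal_le_ofReal hx.le
    have h2 : ∫⁻ y, ‖fderiv ℝ u y‖ₑ ∂μ ≤ D ^ (1 / p) := by
      simpa using lintegral_le_rpow_mul_measure μ hp hGm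
    have h3 : 2 * (ENNReal.ofReal t * lam t) ≤ ENNReal.ofReal t := by
      calc 2 * (ENNReal.ofReal t * lam t) ≤ 2 * (B * D ^ (1 / p)) := by
            refine mul_le_mul_right (h1.trans (hpoin.trans ?_)) _
            gcongr
        _ = ENNReal.ofReal t0 := by rw [ht0e]; ring
        _ ≤ _ := ENNReal.ofReal_le_ofReal ht.le
    have htne : ENNReal.ofReal t ≠ 0 := by simpa using htpos
    rw [ENNReal.le_div_iff_mul_le (Or.inl two_ne_zero) (Or.inl ENNReal.ofNat_ne_top)]
    refine (ENNReal.mul_le_mul_iff_right htne ENNReal.ofReal_ne_top).1 ?_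
    rw [mul_one]
    calc _ = 2 * (ENNReal.ofReal t * lam t) := by ring
      _ ≤ _ := h3
  have hstep : ∀ t ∈ Ioi t0, 2 * F (2 * t) ≤
      2 ^ p * (2 * ENNReal.ofReal M * B * ε⁻¹) ^ p * (Gt t * (ENNReal.ofReal t)⁻¹) +
        2⁻¹ * F t := by
    intro t ht
    have htpos : 0 < t := ht00.trans_lt ht
    obtain ⟨T, hT, hT0, hT1, hTd0, hTd⟩ := hM t htpos
    have hlay := layer_estimate hB hu htpos hM0 hT hT0 hT1 hTd0 hTd (hhalf t ht)
    have hhold := lintegral_le_rpow_mul_measure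
      (μ.restrict {y | t < |u y| ∧ |u y| ≤ 2 * t}) hp hGm
    have hsub : (μ.restrict {y | t < |u y| ∧ |u y| ≤ 2 * t}) univ ≤ lam t := by
      rw [Measure.restrict_apply_univ]
      exact measure_mono fun y hy => hy.1
    have hq0 : 0 ≤ 1 - 1 / p := by
      rw [sub_nonneg, div_le_one hp0]; exact hp
    have hyp : ENNReal.ofReal t * lam (2 * t) ≤ (2 * ENNReal.ofReal M * B) *
        lam (2 * t) ^ (1 / (n : ℝ)) * (Gt t ^ (1 / p) * lam t ^ (1 - 1 / p)) := by
      refine hlay.trans (mul_le_mul_right (hhold.trans ?_) _)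
      exact mul_le_mul_right (ENNReal.rpow_le_rpow hsub hq0) _
    have hdic := dichotomy hp hs hsp hε0 hε1 (measure_ne_top μ _) hyp
    have e1 : 2 * F (2 * t) = 2 ^ p * (ENNReal.ofReal t * lam (2 * t) ^ (1 / s)) ^ p *
        (ENNReal.ofReal t)⁻¹ := by
      simp only [hF]
      rw [ENNReal.ofReal_mul zero_le_two, ENNReal.ofReal_ofNat, mul_assoc,
        ENNReal.mul_rpow_of_nonneg _ _ hp0.le,
        ENNReal.mul_inv (Or.inl two_ne_zero) (Or.inl ENNReal.ofNat_ne_top)]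
      calc _ = (2 * 2⁻¹) * (2 ^ p * (ENNReal.ofReal t * lam (2 * t) ^ (1 / s)) ^ p *
        (ENNReal.ofReal t)⁻¹) := by ring
        _ = _ := by rw [ENNReal.mul_inv_cancel two_ne_zero ENNReal.ofNat_ne_top, one_mul]
    rw [e1]
    calc _ ≤ 2 ^ p * ((2 * ENNReal.ofReal M * B * ε⁻¹) ^ p * Gt t +
          ε ^ (p / s) * (ENNReal.ofReal t * lam t ^ (1 / s)) ^ p) * (ENNReal.ofReal t)⁻¹ := by
          gcongr
      _ = 2 ^ p * (2 * ENNReal.ofReal M * B * ε⁻¹) ^ p * (Gt t * (ENNReal.ofReal t)⁻¹) +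
          (2 ^ p * ε ^ (p / s)) * F t := by simp only [hF]; ring
      _ = _ := by rw [hεp]
  set I : ℝ≥0∞ := ∫⁻ t in Ioi (0 : ℝ), F t with hI
  have hIfin : I ≠ ∞ := by
    have h1 : I ≤ ∫⁻ t in Ioc (0 : ℝ) R, F t := by
      rw [hI, ← lintegral_indicator measurableSet_Ioi, ← lintegral_indicator measurableSet_Ioc]
      refine lintegral_mono fun t => ?_
      by_cases ht : t ∈ Ioc (0 : ℝ) R
      · rw [indicator_of_mem ht, indicator_of_mem (show t ∈ Ioi (0 : ℝ) from ht.1)]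
      · rw [indicator_of_notMem ht]
        by_cases ht1 : t ∈ Ioi (0 : ℝ)
        · rw [indicator_of_mem ht1]
          have hz : lam t = 0 := by
            have htR : R < t := by
              by_contra hcon
              exact ht ⟨ht1, by linarith⟩
            refine measure_mono_null (fun x hx => ?_) (ae_iff.1 hR)
            simp only [mem_ofPred_eq, not_le] at hx ⊢
            linarith
          simp only [hF, hz]
          rw [ENNReal.zero_rpow_of_pos (by positivity), mul_zero, ENNReal.zero_rpow_of_pos hp0,
            zero_mul]
        · rw [indicator_of_notMem ht1]
    refine ne_top_of_le_ne_top ?_ (h1.trans (lintegral_Ioc_le_rpow hp hR0 hlam1))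
    exact ENNReal.rpow_ne_top_of_nonneg hp0.le ENNReal.ofReal_ne_top
  have hXle : I ≤ ((2 * ENNReal.ofReal t0) ^ p +
      2 ^ p * (2 * ENNReal.ofReal M * B * ε⁻¹) ^ p * D) + 2⁻¹ * I := by
    have hcov : Ioi (0 : ℝ) ⊆ Ioc 0 (2 * t0) ∪ Ioi (2 * t0) := by
      intro t ht
      rcases le_or_gt t (2 * t0) with h | h
      · exact Or.inl ⟨ht, h⟩
      · exact Or.inr h
    have hA : ∫⁻ t in Ioc (0 : ℝ) (2 * t0), F t ≤ (2 * ENNReal.ofReal t0) ^ p := by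
      have := lintegral_Ioc_le_rpow hp (by positivity : 0 ≤ 2 * t0) hlam1
      rwa [ENNReal.ofReal_mul zero_le_two, ENNReal.ofReal_ofNat] at this
    have hBd : ∫⁻ t in Ioi (2 * t0), F t ≤
        2 ^ p * (2 * ENNReal.ofReal M * B * ε⁻¹) ^ p * D + 2⁻¹ * I := by
      rw [lintegral_Ioi_two_mul]
      have hsub0 : Ioi t0 ⊆ Ioi (0 : ℝ) := Ioi_subset_Ioi ht00
      have hCt : 2 ^ p * (2 * ENNReal.ofReal M * B * ε⁻¹) ^ p ≠ ∞ := by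
        refine ENNReal.mul_ne_top (ENNReal.rpow_ne_top_of_nonneg hp0.le ENNReal.ofNat_ne_top)
          (ENNReal.rpow_ne_top_of_nonneg hp0.le ?_)
        exact ENNReal.mul_ne_top (ENNReal.mul_ne_top (ENNReal.mul_ne_top ENNReal.ofNat_ne_top
          ENNReal.ofReal_ne_top) hBt) (ENNReal.inv_ne_top.2 hε0)
      calc _ ≤ ∫⁻ t in Ioi t0, (2 ^ p * (2 * ENNReal.ofReal M * B * ε⁻¹) ^ p *
            (Gt t * (ENNReal.ofReal t)⁻¹) + 2⁻¹ * F t) :=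
            setLIntegral_mono' measurableSet_Ioi hstep
        _ = 2 ^ p * (2 * ENNReal.ofReal M * B * ε⁻¹) ^ p *
            (∫⁻ t in Ioi t0, Gt t * (ENNReal.ofReal t)⁻¹) + 2⁻¹ * ∫⁻ t in Ioi t0, F t := by
            rw [lintegral_add_right _ (hFm.const_mul _), lintegral_const_mul' _ _ hCt,
              lintegral_const_mul _ hFm]
        _ ≤ _ := by
            gcongr
            · exact (lintegral_mono_set hsub0).trans
                (lintegral_layers_le μ huc.measurable (hGm.pow_const p))
            · exact lintegral_mono_set hsub0
    calc I ≤ ∫⁻ t in Ioc (0 : ℝ) (2 * t0) ∪ Ioi (2 * t0), F t := lintegral_mono_set hcov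
      _ ≤ (∫⁻ t in Ioc (0 : ℝ) (2 * t0), F t) + ∫⁻ t in Ioi (2 * t0), F t :=
          lintegral_union_le _ _ _
      _ ≤ _ := by
          rw [add_assoc]
          exact add_le_add hA hBd
  set X : ℝ≥0∞ := (2 * ENNReal.ofReal t0) ^ p +
      2 ^ p * (2 * ENNReal.ofReal M * B * ε⁻¹) ^ p * D with hX
  have habs : I ≤ 2 * X := by
    have hhalfI : 2⁻¹ * I ≠ ∞ := ENNReal.mul_ne_top (by simp) hIfin
    have h1 : 2⁻¹ * I + 2⁻¹ * I ≤ X + 2⁻¹ * I := by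
      rw [← add_mul, ENNReal.inv_two_add_inv_two, one_mul]; exact hXle
    have h2 : 2⁻¹ * I ≤ X := (ENNReal.add_le_add_iff_right hhalfI).1 h1
    calc I = 2 * (2⁻¹ * I) := by
          rw [← mul_assoc, ENNReal.mul_inv_cancel two_ne_zero ENNReal.ofNat_ne_top, one_mul]
      _ ≤ 2 * X := by gcongr
  refine habs.trans (le_of_eq ?_)
  have e2 : (2 * ENNReal.ofReal t0) ^ p = 4 ^ p * B ^ p * D := by
    rw [ht0e, show 2 * (2 * B * D ^ (1 / p)) = 4 * B * D ^ (1 / p) by ring,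
      ENNReal.mul_rpow_of_nonneg _ _ hp0.le, ENNReal.mul_rpow_of_nonneg _ _ hp0.le,
      ← ENNReal.rpow_mul, one_div_mul_cancel hp0.ne', ENNReal.rpow_one]
  have e3 : (2 * ENNReal.ofReal M * B * ε⁻¹) ^ p = (2 * ENNReal.ofReal M * ε⁻¹) ^ p * B ^ p := by
    rw [← ENNReal.mul_rpow_of_nonneg _ _ hp0.le]; congr 1; ring
  rw [hX, e2, e3]
  ring

/-! ### Cubes with normalized Lebesgue measure -/

/-- The pair inequality on a cube, in scale-invariant form. -/
lemma pair_inequality_cube {n : ℕ} (hn : 2 ≤ n) (a : En n) {h : ℝ} (hh : 0 < h)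
    {μ : Measure (En n)} (hμ : μ = (volume (cube a h))⁻¹ • volume.restrict (cube a h))
    {g : En n → ℝ} (hg : ContDiff ℝ 1 g) {E : Set (En n)} (hE : MeasurableSet E) :
    ∫⁻ x in E, ∫⁻ z, ‖g x - g z‖ₑ ∂μ ∂μ ≤
      ((volume (Metric.ball (0 : En n) 1) + 1) * (n : ℝ≥0∞) ^ n * ENNReal.ofReal h) *
        μ E ^ (1 / (n : ℝ)) * ∫⁻ y, ‖fderiv ℝ g y‖ₑ ∂μ := by
  have hn0 : (0 : ℝ) < n := by
    have : 0 < n := by omega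
    exact_mod_cast this
  have hV := volume_cube a hh
  have hV0 : volume (cube a h) ≠ 0 := by
    rw [hV]; simpa using pow_pos hh n
  have hVt : volume (cube a h) ≠ ∞ := by rw [hV]; exact ENNReal.ofReal_ne_top
  have hQ := measurableSet_cube a h
  have hEQ : volume (E ∩ cube a h) ≠ ∞ := measure_ne_top_of_subset inter_subset_right hVt
  have hmain := lintegral_lintegral_enorm_sub_le hn hQ (convex_cube a h)
    (by positivity : 0 < n * h) (fun x hx z hz => norm_sub_le_of_mem_cube hh hx hz)
    (hE.inter hQ) inter_subset_right hEQ hg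
  set V : ℝ≥0∞ := volume (cube a h) with hVdef
  have hroot : V ^ (1 / (n : ℝ)) = ENNReal.ofReal h := by
    rw [hV, ENNReal.ofReal_pow hh.le, ← ENNReal.rpow_natCast, ← ENNReal.rpow_mul,
      mul_one_div_cancel hn0.ne', ENNReal.rpow_one]
  have hμE : volume (E ∩ cube a h) ^ (1 / (n : ℝ)) = ENNReal.ofReal h * μ E ^ (1 / (n : ℝ)) := by
    rw [← hroot, ← ENNReal.mul_rpow_of_nonneg _ _ (by positivity : 0 ≤ 1 / (n : ℝ))]
    congr 1
    rw [hμ, Measure.smul_apply, Measure.restrict_apply hE, smul_eq_mul, ← mul_assoc,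
      ENNReal.mul_inv_cancel hV0 hVt, one_mul]
  have hd : ENNReal.ofReal ((n * h) ^ n) = (n : ℝ≥0∞) ^ n * V := by
    rw [mul_pow, ENNReal.ofReal_mul (by positivity), hV, ENNReal.ofReal_pow hn0.le,
      ENNReal.ofReal_natCast]
  have hinner : ∀ G : En n → ℝ≥0∞, ∫⁻ z, G z ∂μ = V⁻¹ * ∫⁻ z in cube a h, G z := by
    intro G
    rw [hμ, lintegral_smul_measure, smul_eq_mul]
  have hL : ∫⁻ x in E, ∫⁻ z, ‖g x - g z‖ₑ ∂μ ∂μ =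
      V⁻¹ * (V⁻¹ * ∫⁻ x in E ∩ cube a h, ∫⁻ z in cube a h, ‖g x - g z‖ₑ) := by
    simp_rw [hinner]
    rw [hμ, Measure.restrict_smul, lintegral_smul_measure, Measure.restrict_restrict hE,
      lintegral_const_mul' _ _ (ENNReal.inv_ne_top.2 hV0), smul_eq_mul]
  rw [hL, hinner]
  rw [hd, hμE] at hmain
  calc _ ≤ V⁻¹ * (V⁻¹ * _) := mul_le_mul_right (mul_le_mul_right hmain _) _
    _ = (V⁻¹ * V) * ((volume (Metric.ball (0 : En n) 1) + 1) * (n : ℝ≥0∞) ^ n *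
        ENNReal.ofReal h * μ E ^ (1 / (n : ℝ)) *
        (V⁻¹ * ∫⁻ y in cube a h, ‖fderiv ℝ g y‖ₑ)) := by ring
    _ = _ := by rw [ENNReal.inv_mul_cancel hV0 hVt, one_mul]

/-- The `(1,1)` Poincaré inequality, obtained by averaging the pair inequality over all pairs. -/
lemma poincare_of_pair {n : ℕ} {μ : Measure (En n)} [IsProbabilityMeasure μ] {B : ℝ≥0∞}
    (hB : ∀ g : En n → ℝ, ContDiff ℝ 1 g → ∀ E, MeasurableSet E →
      ∫⁻ x in E, ∫⁻ z, ‖g x - g z‖ₑ ∂μ ∂μ ≤ B * μ E ^ (1 / (n : ℝ)) * ∫⁻ y, ‖fderiv ℝ g y‖ₑ ∂μ)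
    {f : En n → ℝ} (hf : ContDiff ℝ 1 f) (hfi : Integrable f μ) :
    ∫⁻ x, ‖f x - ∫ z, f z ∂μ‖ₑ ∂μ ≤ B * ∫⁻ y, ‖fderiv ℝ f y‖ₑ ∂μ := by
  have h1 := hB f hf univ MeasurableSet.univ
  simp only [Measure.restrict_univ, measure_univ, ENNReal.one_rpow, mul_one] at h1
  refine le_trans (lintegral_mono fun x => ?_) h1
  have h2 : f x - ∫ z, f z ∂μ = ∫ z, (f x - f z) ∂μ := by
    rw [integral_sub (integrable_const _) hfi]; simp
  rw [h2]
  exact enorm_integral_le_lintegral_enorm _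

/-- Poincaré–Sobolev inequality in Lorentz spaces, `1 ≤ p < n`:
`‖f - f_Q‖_{L^{p*,p}(Q, dx/|Q|)} ≤ c ℓ(Q) (⨍_Q |∇f|^p)^{1/p}` for `f ∈ C^∞(ℝⁿ)`. -/
theorem statement13 (n : ℕ) (hn : 2 ≤ n) (p : ℝ) (hp : 1 ≤ p) (hpn : p < n) :
    ∃ c : ℝ, 0 < c ∧ ∀ f : En n → ℝ, ContDiff ℝ (⊤ : ℕ∞) f →
      ∀ (a : En n) (h : ℝ), 0 < h →
        lorentzSQ (n * p / (n - p)) p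
            (fun x => f x - (volume (cube a h)).toReal⁻¹ * ∫ y in cube a h, f y)
            ((volume (cube a h))⁻¹ • volume.restrict (cube a h)) ≤
          ENNReal.ofReal c * ENNReal.ofReal h *
            ((volume (cube a h))⁻¹ *
              ∫⁻ x in cube a h, ENNReal.ofReal (‖fderiv ℝ f x‖ ^ p)) ^ (1 / p) := by
  have hp0 : 0 < p := by linarith
  have hnp : 0 < (n : ℝ) - p := by linarith
  have hn0 : (0 : ℝ) < n := by linarith
  set s : ℝ := n * p / (n - p) with hs
  have hs0 : 0 < s := by positivity
  have hsp : 1 / s = 1 / p - 1 / (n : ℝ) := by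
    rw [hs]; field_simp
  obtain ⟨c₀, hc₀, hmain⟩ := lorentz_integral_le (n := n) hp hs0 hsp
  set b : ℝ≥0∞ := (volume (Metric.ball (0 : En n) 1) + 1) * (n : ℝ≥0∞) ^ n with hb
  have hbt : b ≠ ∞ := ENNReal.mul_ne_top
    (ENNReal.add_ne_top.2 ⟨measure_ball_lt_top.ne, ENNReal.one_ne_top⟩)
    (ENNReal.pow_ne_top (ENNReal.natCast_ne_top n))
  set c : ℝ≥0∞ := (ENNReal.ofReal s * c₀) ^ (1 / p) * b with hc
  have hct : c ≠ ∞ := ENNReal.mul_ne_top (ENNReal.rpow_ne_top_of_nonneg (by positivity)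
    (ENNReal.mul_ne_top ENNReal.ofReal_ne_top hc₀)) hbt
  refine ⟨c.toReal + 1, by positivity, fun f hf a h hh => ?_⟩
  have hf1 : ContDiff ℝ 1 f := hf.of_le (by exact_mod_cast le_top)
  set Q := cube a h with hQ
  have hV0 : volume Q ≠ 0 := by
    rw [hQ, volume_cube a hh]; simpa using pow_pos hh n
  have hVt : volume Q ≠ ∞ := by rw [hQ, volume_cube a hh]; exact ENNReal.ofReal_ne_top
  have hQm : MeasurableSet Q := measurableSet_cube a h
  have hQk : IsCompact Q := isCompact_cube a h
  set μ : Measure (En n) := (volume Q)⁻¹ • volume.restrict Q with hμ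
  have hprob : IsProbabilityMeasure μ := by
    refine ⟨?_⟩
    rw [hμ, Measure.smul_apply, Measure.restrict_apply_univ, smul_eq_mul,
      ENNReal.inv_mul_cancel hV0 hVt]
  have hae : ∀ᵐ y ∂μ, y ∈ Q := Measure.ae_smul_measure (ae_restrict_mem hQm) _
  have hfi : Integrable f μ :=
    (hf1.continuous.continuousOn.integrableOn_compact hQk).smul_measure (ENNReal.inv_ne_top.2 hV0)
  have havg : (volume Q).toReal⁻¹ * ∫ y in Q, f y = ∫ y, f y ∂μ := by
    rw [hμ, integral_smul_measure, ENNReal.toReal_inv, smul_eq_mul]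
  have hgrad : (volume Q)⁻¹ * ∫⁻ x in Q, ENNReal.ofReal (‖fderiv ℝ f x‖ ^ p) =
      ∫⁻ x, ‖fderiv ℝ f x‖ₑ ^ p ∂μ := by
    rw [hμ, lintegral_smul_measure, smul_eq_mul]
    congr 1
    refine lintegral_congr fun x => ?_
    rw [← ofReal_norm, ENNReal.ofReal_rpow_of_nonneg (norm_nonneg _) hp0.le]
  rw [havg, hgrad]
  set B : ℝ≥0∞ := b * ENNReal.ofReal h with hBdef
  have hBt : B ≠ ∞ := ENNReal.mul_ne_top hbt ENNReal.ofReal_ne_top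
  have hB : ∀ g : En n → ℝ, ContDiff ℝ 1 g → ∀ E, MeasurableSet E →
      ∫⁻ x in E, ∫⁻ z, ‖g x - g z‖ₑ ∂μ ∂μ ≤
        B * μ E ^ (1 / (n : ℝ)) * ∫⁻ y, ‖fderiv ℝ g y‖ₑ ∂μ :=
    fun g hg E hE => pair_inequality_cube hn a hh hμ hg hE
  set u : En n → ℝ := fun x => f x - ∫ y, f y ∂μ with hu
  have huc : ContDiff ℝ 1 u := hf1.sub contDiff_const
  have hfd : ∀ y, fderiv ℝ u y = fderiv ℝ f y := fun y => fderiv_sub_const _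
  have hpoin : ∫⁻ y, ‖u y‖ₑ ∂μ ≤ B * ∫⁻ y, ‖fderiv ℝ u y‖ₑ ∂μ := by
    simp_rw [hfd]
    exact poincare_of_pair hB hf1 hfi
  have hbdd : ∃ R : ℝ, 0 ≤ R ∧ ∀ᵐ y ∂μ, |u y| ≤ R := by
    obtain ⟨R, hR⟩ := hQk.exists_bound_of_continuousOn huc.continuous.continuousOn
    refine ⟨max R 0, le_max_right _ _, hae.mono fun y hy => (hR y hy).trans (le_max_left _ _)⟩
  have hfin : ∫⁻ y, ‖fderiv ℝ u y‖ₑ ^ p ∂μ ≠ ∞ := by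
    obtain ⟨R, hR⟩ := hQk.exists_bound_of_continuousOn
      (huc.continuous_fderiv one_ne_zero).continuousOn
    refine ne_top_of_le_ne_top (b := ENNReal.ofReal R ^ p)
      (ENNReal.rpow_ne_top_of_nonneg hp0.le ENNReal.ofReal_ne_top) ?_
    calc ∫⁻ y, ‖fderiv ℝ u y‖ₑ ^ p ∂μ ≤ ∫⁻ _, ENNReal.ofReal R ^ p ∂μ := by
          refine lintegral_mono_ae (hae.mono fun y hy => ?_)
          rw [← ofReal_norm]
          gcongr
          exact hR y hy
      _ = _ := by simp
  have hI := hmain μ B hBt hB u huc hpoin hbdd hfin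
  simp_rw [hfd] at hI
  unfold lorentzSQ
  set D : ℝ≥0∞ := ∫⁻ y, ‖fderiv ℝ f y‖ₑ ^ p ∂μ with hD
  have hp1 : 0 ≤ 1 / p := by positivity
  calc _ ≤ (ENNReal.ofReal s * (c₀ * B ^ p * D)) ^ (1 / p) := by gcongr
    _ = (ENNReal.ofReal s * c₀) ^ (1 / p) * B * D ^ (1 / p) := by
        rw [show ENNReal.ofReal s * (c₀ * B ^ p * D) = ENNReal.ofReal s * c₀ * B ^ p * D by ring,
          ENNReal.mul_rpow_of_nonneg _ _ hp1, ENNReal.mul_rpow_of_nonneg _ _ hp1,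
          ← ENNReal.rpow_mul, mul_one_div_cancel hp0.ne', ENNReal.rpow_one]
    _ = c * ENNReal.ofReal h * D ^ (1 / p) := by rw [hBdef, hc]; ring
    _ ≤ _ := by
        gcongr
        rw [← ENNReal.ofReal_toReal hct]
        exact ENNReal.ofReal_le_ofReal (by simp)
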